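/- Let q be an odd prime power (q = p^h, p odd prime), ℓ > 1, 0 < d < 2ℓ with gcd(ℓ,d) = 1 and ℓ + d odd, let β be a nonsquare of F_{q^{2ℓ}}, and let ω ∈ F_{q^{2ℓ}}^* satisfy ω^{q^ℓ} = −ω. Define on F_{q^{2ℓ}} the multiplication x⋆y = x·y^{q^ℓ} + x^{q^ℓ}·y + (β·(x·y^{q^d} + x^{q^d}·y) + β^{q^ℓ}·(x·y^{q^d} + x^{q^d}·y)^{q^ℓ})·ω. Then: (1) there exists ξ ∈ F_{q^{2ℓ}}^* with ξ^{q^{ℓ+d}−1} = β^{1−q^ℓ}, and for any such ξ the middle-nucleus set {ψ ∈ End_{F_p}(F_{q^{2ℓ}}) : for every y there exists z with ψ(x)⋆y = x⋆z for all x} equals {x ↦ a·x + b·ξ·x^{q^ℓ} : a,b ∈ F_q}, and hence has exactly q² elements; (2) the right-nucleus set {μ ∈ End_{F_p}(F_{q^{2ℓ}}) : for every y there exists z with μ(x⋆y) = x⋆z for all x} equals {x ↦ a·x : a ∈ F_q}, and hence has exactly q elements. -/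

import Mathlib

/-- The multiplication `x ⋆ y` of the Budaghyan–Helleseth presemifield
`BH(q,ℓ,d,β)` on `F_{q^{2ℓ}}` (realized as `GaloisField p (h * (2ℓ))`, `q = p^h`):
`x⋆y = x·y^{q^ℓ} + x^{q^ℓ}·y + (β·(x·y^{q^d} + x^{q^d}·y)
        + β^{q^ℓ}·(x·y^{q^d} + x^{q^d}·y)^{q^ℓ})·ω`. -/
noncomputable def bhMul (p h ℓ d q : ℕ) [Fact p.Prime]
    (β ω : GaloisField p (h * (2 * ℓ))) (x y : GaloisField p (h * (2 * ℓ))) :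
    GaloisField p (h * (2 * ℓ)) :=
  x * y ^ q ^ ℓ + x ^ q ^ ℓ * y +
    (β * (x * y ^ q ^ d + x ^ q ^ d * y) +
        β ^ q ^ ℓ * (x * y ^ q ^ d + x ^ q ^ d * y) ^ q ^ ℓ) * ω

/-! The powers of an automorphism are linearly independent (Dedekind), so an identity between
products is an identity between coefficients. If `ψ x ⋆ y = x ⋆ g y`, the first summand of `⋆`
gives `ψ x = a x + c σ x`, where `σ` is the `q ^ ℓ`-power map, and the second makes `a` and `c / ξ`
fixed points of the `q ^ (ℓ + d)`-power map. Since `ℓ + d` is coprime to `2 ℓ`, that map generates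
the Galois group over `F_q`. Hence its fixed field is `F_q`, and `σ` is one of its powers, so that
the equation for `ξ` is solved by a telescoping product. If `μ (x ⋆ y) = x ⋆ g y`, then
`g x ⋆ y = x ⋆ g y` by commutativity, so `g` has the same shape as `ψ`; transposing `x ↦ x ⋆ y` with
respect to the trace form kills the `c`-term and shows that `μ` is determined by `g`. -/

/-- The maps `ψ` for which every right translation satisfies `mul (ψ x) y = mul x z` with `z`
depending only on `y`; for the multiplication of a presemifield this is its middle nucleus. -/
def middleNucleus (F : Type*) {E : Type*} [Semiring F] [AddCommMonoid E] [Module F E]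
    (mul : E → E → E) : Set (E →ₗ[F] E) :=
  {ψ | ∀ y, ∃ z, ∀ x, mul (ψ x) y = mul x z}

/-- The maps `μ` that can be moved from a product to its right factor, `μ (mul x y) = mul x z` with
`z` depending only on `y`; for the multiplication of a presemifield this is its right nucleus. -/
def rightNucleus (F : Type*) {E : Type*} [Semiring F] [AddCommMonoid E] [Module F E]
    (mul : E → E → E) : Set (E →ₗ[F] E) :=
  {μ | ∀ y, ∃ z, ∀ x, μ (mul x y) = mul x z}

theorem eq_zero_of_mul_apply_add_sum_eq_zero {ι H M L : Type*} [Fintype ι] [Monoid M]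
    [CommRing L] [IsDomain L] [FunLike H M L] [MonoidHomClass H M L] {θ₀ : H} {θ : ι → H}
    (hθ : ∀ i, θ i ≠ θ₀) {c : L} {b : ι → L} (h : ∀ y, c * θ₀ y + ∑ i, b i * θ i y = 0) :
    c = 0 := by
  have hindep := linearIndependent_iff_eq_zero_of_smul_mem_span.mp (linearIndependent_monoidHom M L)
  refine hindep (θ₀ : M →* L) c ?_
  have hθ₀ : c • ⇑(θ₀ : M →* L) = -∑ i, b i • ⇑(θ i : M →* L) := by
    ext y
    simpa using eq_neg_of_add_eq_zero_left (h y)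
  have hne (i : ι) : (θ i : M →* L) ≠ θ₀ := fun hi =>
    hθ i (DFunLike.ext _ _ fun y => DFunLike.congr_fun hi y)
  rw [hθ₀]
  exact neg_mem <| sum_mem fun i _ => Submodule.smul_mem _ _ <|
    Submodule.subset_span ⟨_, ⟨Set.mem_univ _, hne i⟩, rfl⟩

section GaloisProduct

variable {F E : Type*} [CommSemiring F] [CommRing E] [Algebra F E] {σ τ : E ≃ₐ[F] E} {β ω : E}

/-- The Budaghyan–Helleseth product with the powers `x ^ q ^ ℓ` and `x ^ q ^ d` replaced by field
automorphisms `σ` and `τ`. -/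
def bhProduct (σ τ : E ≃ₐ[F] E) (β ω x y : E) : E :=
  x * σ y + σ x * y + (β * (x * τ y + τ x * y) + σ β * σ (x * τ y + τ x * y)) * ω

theorem bhProduct_comm (x y : E) : bhProduct σ τ β ω x y = bhProduct σ τ β ω y x := by
  simp only [bhProduct, map_add, map_mul]
  ring

theorem bhProduct_mul_right {a : E} (hσa : σ a = a) (hτa : τ a = a) (x y : E) :
    bhProduct σ τ β ω x (a * y) = a * bhProduct σ τ β ω x y := by
  simp only [bhProduct, map_add, map_mul, hσa, hτa]
  ring

theorem bhProduct_mul_add_mul_apply (hσ : Function.Involutive σ) (hστ : Function.Commute σ τ)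
    {a c : E} (ha : σ (τ a) = a) (hc : σ β * σ (τ c) = β * c) (x y : E) :
    bhProduct σ τ β ω (a * x + c * σ x) y = bhProduct σ τ β ω x (σ a * y + c * σ y) := by
  have hτa : τ a = σ a := by simpa [hσ _] using congrArg σ ha
  have hc' : β * τ c = σ β * σ c := by simpa [hσ _] using congrArg σ hc
  rw [hστ] at ha hc
  simp only [bhProduct, map_add, map_mul, hσ _, hστ _, hτa, ha]
  linear_combination ω * (x * τ (σ y) - τ (σ x) * y) * (-hc') +
    ω * (τ x * σ y - σ x * τ y) * hc

variable [IsDomain E]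

theorem eq_and_eq_of_add_mul_eq_add_mul {u v u' v' : E} (hu : σ u = u) (hv : σ v = v)
    (hu' : σ u' = u') (hv' : σ v' = v') (hω : σ ω ≠ ω) (h : u + v * ω = u' + v' * ω) :
    u = u' ∧ v = v' := by
  have h' : u + v * σ ω = u' + v' * σ ω := by simpa [hu, hv, hu', hv'] using congrArg σ h
  have hvv' : v = v' := mul_right_cancel₀ (sub_ne_zero.mpr hω) (by linear_combination h' - h)
  exact ⟨by simpa [hvv'] using h, hvv'⟩

theorem bhProduct_eq_bhProduct_iff (hσ : Function.Involutive σ) (hω : σ ω ≠ ω) {x y x' y' : E} :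
    bhProduct σ τ β ω x y = bhProduct σ τ β ω x' y' ↔
      x * σ y + σ x * y = x' * σ y' + σ x' * y' ∧
      β * (x * τ y + τ x * y) + σ β * σ (x * τ y + τ x * y) =
        β * (x' * τ y' + τ x' * y') + σ β * σ (x' * τ y' + τ x' * y') := by
  have hfix₁ (x y : E) : σ (x * σ y + σ x * y) = x * σ y + σ x * y := by
    simp only [map_add, map_mul, hσ _]
    ring
  have hfix₂ (u : E) : σ (β * u + σ β * σ u) = β * u + σ β * σ u := by
    simp only [map_add, map_mul, hσ _]
    ring
  refine ⟨eq_and_eq_of_add_mul_eq_add_mul (hfix₁ x y) (hfix₂ _) (hfix₁ x' y') (hfix₂ _) hω, ?_⟩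
  rintro ⟨h₁, h₂⟩
  rw [bhProduct, bhProduct, h₁, h₂]

end GaloisProduct

section MiddleNucleus

variable {F E : Type*} [CommSemiring F] [Field E] [Algebra F E] {σ τ : E ≃ₐ[F] E} {β ω : E}

theorem exists_coeffs_of_adjoint (hσ : Function.Involutive σ) (hω : σ ω ≠ ω) {f g : E → E}
    (h : ∀ x y, f x * σ y + σ (f x) * y = x * σ (g y) + σ x * g y) :
    ∃ a c, (∀ x, f x = a * x + c * σ x) ∧ ∀ y, g y = σ a * y + c * σ y := by
  -- Cramer's rule for `f x` and `σ (f x)` in the equations `y = 1` and `y = ω`.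
  obtain ⟨a, c, hf⟩ : ∃ a c, ∀ x, f x = a * x + c * σ x := by
    refine ⟨(ω * σ (g 1) - σ (g ω)) / (ω - σ ω), (ω * g 1 - g ω) / (ω - σ ω), fun x => ?_⟩
    have h₁ : f x + σ (f x) = x * σ (g 1) + σ x * g 1 := by simpa using h x 1
    field_simp
    linear_combination ω * h₁ - h x ω
  have hσ1 : σ ≠ 1 := DFunLike.ne_iff.mpr ⟨ω, hω⟩
  refine ⟨a, c, hf, fun y => (sub_eq_zero.mp ?_).symm⟩
  refine eq_zero_of_mul_apply_add_sum_eq_zero (θ₀ := σ) (θ := ![1])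
    (b := ![a * σ y + σ c * y - σ (g y)]) (by simpa using hσ1.symm) fun x => ?_
  have hx := h x y
  simp only [hf, map_add, map_mul, hσ _] at hx
  simp only [Fin.sum_univ_one, Matrix.cons_val, AlgEquiv.one_apply]
  linear_combination hx

theorem exists_coeffs_of_bhProduct_eq (hσ : Function.Involutive σ) (hστ : Function.Commute σ τ)
    (hω : σ ω ≠ ω) (hβ : β ≠ 0) (hτ1 : τ ≠ 1) (hστ1 : σ * τ ≠ 1) {f g : E → E}
    (h : ∀ x y, bhProduct σ τ β ω (f x) y = bhProduct σ τ β ω x (g y)) :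
    ∃ a c, (∀ x, f x = a * x + c * σ x) ∧ (∀ y, g y = σ a * y + c * σ y) ∧
      σ (τ a) = a ∧ σ β * σ (τ c) = β * c := by
  obtain ⟨a, c, hf, hg⟩ := exists_coeffs_of_adjoint hσ hω fun x y =>
    ((bhProduct_eq_bhProduct_iff hσ hω).mp (h x y)).1
  have hσ1 : σ ≠ 1 := DFunLike.ne_iff.mpr ⟨ω, hω⟩
  have hcoeff (y : E) : β * (a - σ (τ a)) * τ y + (σ β * σ c - β * τ c) * (σ * τ) y = 0 := by
    refine eq_zero_of_mul_apply_add_sum_eq_zero (θ₀ := (1 : E ≃ₐ[F] E)) (θ := ![σ, τ, σ * τ])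
      (b := ![σ (β * (a - σ (τ a)) * τ y + (σ β * σ c - β * τ c) * σ (τ y)),
        β * (τ a - σ a) * y + (σ β * σ (τ c) - β * c) * σ y,
        σ (β * (τ a - σ a) * y + (σ β * σ (τ c) - β * c) * σ y)])
      (by simp [Fin.forall_fin_succ, hσ1, hτ1, hστ1]) fun x => ?_
    have hx := ((bhProduct_eq_bhProduct_iff hσ hω).mp (h x y)).2
    simp only [hf, hg, map_add, map_mul, hσ _, hστ _] at hx
    simp only [Fin.sum_univ_three, Matrix.cons_val, AlgEquiv.one_apply, AlgEquiv.mul_apply,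
      map_add, map_mul, map_sub, hσ _, hστ _]
    linear_combination hx
  have hβa : β * (a - σ (τ a)) = 0 :=
    eq_zero_of_mul_apply_add_sum_eq_zero (θ₀ := τ) (θ := ![σ * τ])
      (b := ![σ β * σ c - β * τ c]) (by simpa using hσ1) (by simpa using hcoeff)
  have hβc : σ β * σ c - β * τ c = 0 := by simpa [hβa] using hcoeff 1
  refine ⟨a, c, hf, hg, ?_, ?_⟩
  · exact (sub_eq_zero.mp ((mul_eq_zero.mp hβa).resolve_left hβ)).symm
  · have hσβc := congrArg σ hβc
    simp only [map_sub, map_mul, hσ _, map_zero] at hσβc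
    linear_combination -hσβc

theorem mem_middleNucleus_bhProduct_iff (hσ : Function.Involutive σ)
    (hστ : Function.Commute σ τ) (hω : σ ω ≠ ω) (hβ : β ≠ 0) (hτ1 : τ ≠ 1) (hστ1 : σ * τ ≠ 1)
    {ψ : E →ₗ[F] E} :
    ψ ∈ middleNucleus F (bhProduct σ τ β ω) ↔
      ∃ a c, σ (τ a) = a ∧ σ β * σ (τ c) = β * c ∧ ∀ x, ψ x = a * x + c * σ x := by
  constructor
  · intro h
    choose g hg using h
    obtain ⟨a, c, hψ, -, ha, hc⟩ := exists_coeffs_of_bhProduct_eq hσ hστ hω hβ hτ1 hστ1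
      fun x y => hg y x
    exact ⟨a, c, ha, hc, hψ⟩
  · rintro ⟨a, c, ha, hc, hψ⟩ y
    refine ⟨σ a * y + c * σ y, fun x => ?_⟩
    rw [hψ, bhProduct_mul_add_mul_apply hσ hστ ha hc]

end MiddleNucleus

theorem ne_one_of_mul_self_ne_one {M : Type*} [MulOneClass M] {t : M} (ht : t * t ≠ 1) : t ≠ 1 := by
  rintro rfl
  exact ht (one_mul 1)

theorem mul_ne_one_of_mul_self_ne_one {G : Type*} [Group G] {s t : G} (hs : s * s = 1)
    (ht : t * t ≠ 1) : s * t ≠ 1 := fun hst => ht <| by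
  rwa [← inv_eq_of_mul_eq_one_right hst, ← mul_inv_rev, inv_eq_one]

section Trace

open Algebra (trace)

variable {F E : Type*} [CommRing F] [Field E] [Algebra F E] {σ τ : E ≃ₐ[F] E} {β ω : E}

/-- The value at `n` of the transpose of `x ↦ bhProduct σ τ β ω x y` with respect to the trace
form. -/
def bhTranspose (σ τ : E ≃ₐ[F] E) (β ω n y : E) : E :=
  (n + σ n) * σ y + (n * ω + σ (n * ω)) * β * τ y + τ⁻¹ ((n * ω + σ (n * ω)) * β * y)

theorem trace_mul_bhProduct (hσ : Function.Involutive σ) (n x y : E) :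
    trace F E (n * bhProduct σ τ β ω x y) = trace F E (x * bhTranspose σ τ β ω n y) := by
  set w := β * (x * τ y + τ x * y) with hw
  set v := (n * ω + σ (n * ω)) * β with hv
  have hσ₁ : trace F E (n * (σ x * y)) = trace F E (σ n * (x * σ y)) := by
    rw [← Algebra.trace_eq_of_algEquiv σ]
    simp only [map_mul, hσ _]
  have hσ₂ : trace F E (n * ω * σ w) = trace F E (σ (n * ω) * w) := by
    rw [← Algebra.trace_eq_of_algEquiv σ, map_mul, hσ]
  have hτ : trace F E (x * τ⁻¹ (v * y)) = trace F E (v * y * τ x) := by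
    rw [← Algebra.trace_eq_of_algEquiv τ, map_mul, mul_comm]
    simp
  calc trace F E (n * bhProduct σ τ β ω x y)
      = trace F E (n * (x * σ y) + n * (σ x * y) + (n * ω * w + n * ω * σ w)) := by
        simp only [bhProduct, hw, map_mul]
        ring_nf
    _ = trace F E ((n + σ n) * (x * σ y) + v * (x * τ y) + v * y * τ x) := by
        rw [map_add, map_add, map_add, hσ₁, hσ₂, ← map_add, ← map_add, ← map_add]
        simp only [hw, hv]
        ring_nf
    _ = trace F E (x * bhTranspose σ τ β ω n y) := by
        rw [map_add, ← hτ, ← map_add, bhTranspose, ← hv]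
        ring_nf

theorem bhTranspose_injective (hσ : Function.Involutive σ) (hω : σ ω ≠ ω) (hβ : β ≠ 0)
    (hττ : τ * τ ≠ 1) : Function.Injective (bhTranspose σ τ β ω) := by
  have hσσ : σ * σ = 1 := AlgEquiv.ext hσ
  have hτσ : τ ≠ σ := by
    rintro rfl
    exact hττ hσσ
  have hτσ' : τ⁻¹ ≠ σ := by
    intro h
    exact hτσ (by rw [← inv_inv τ, h, inv_eq_of_mul_eq_one_left hσσ])
  have hττ' : τ⁻¹ ≠ τ := fun h => hττ (by nth_rw 1 [← h, inv_mul_cancel])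
  intro n m hnm
  set s := n + σ n - (m + σ m) with hs
  set v := (n * ω + σ (n * ω) - (m * ω + σ (m * ω))) * β with hv
  have hzero (y : E) : s * σ y + v * τ y + τ⁻¹ v * τ⁻¹ y = 0 := by
    have hy := congrFun hnm y
    simp only [bhTranspose, map_mul, map_add] at hy
    simp only [hs, hv, map_mul, map_add, map_sub]
    linear_combination hy
  have hs0 : s = 0 := eq_zero_of_mul_apply_add_sum_eq_zero (θ₀ := σ) (θ := ![τ, τ⁻¹])
    (b := ![v, τ⁻¹ v]) (by simp [Fin.forall_fin_succ, hτσ, hτσ']) fun y => by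
      simpa [add_assoc] using hzero y
  have hv0 : v = 0 := eq_zero_of_mul_apply_add_sum_eq_zero (θ₀ := τ) (θ := ![τ⁻¹])
    (b := ![τ⁻¹ v]) (by simpa using hττ') fun y => by simpa [hs0] using hzero y
  have hω0 := (mul_eq_zero.mp hv0).resolve_right hβ
  simp only [map_mul] at hω0
  refine mul_right_cancel₀ (sub_ne_zero.mpr hω) ?_
  linear_combination σ ω * hs0 - hω0

theorem exists_mul_add_apply_eq_zero_and_add_apply_ne_zero (hσ : Function.Involutive σ)
    (hω : σ ω ≠ ω) : ∃ m, m * ω + σ (m * ω) = 0 ∧ m + σ m ≠ 0 := by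
  refine ⟨σ ω * (ω - σ ω), ?_, ?_⟩
  · simp only [map_mul, map_sub, hσ _]
    ring
  · have hm : σ ω * (ω - σ ω) + σ (σ ω * (ω - σ ω)) = -(ω - σ ω) ^ 2 := by
      simp only [map_mul, map_sub, hσ _]
      ring
    rw [hm]
    exact neg_ne_zero.mpr (pow_ne_zero 2 (sub_ne_zero.mpr hω.symm))

theorem eq_zero_of_bhTranspose_mul_add_mul_apply_eq (hσ : Function.Involutive σ) (hσ1 : σ ≠ 1)
    (hτ1 : τ ≠ 1) {m n a c : E} (hmω : m * ω + σ (m * ω) = 0) (hm : m + σ m ≠ 0)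
    (h : ∀ y, bhTranspose σ τ β ω m (a * y + c * σ y) = bhTranspose σ τ β ω n y) : c = 0 := by
  set v := (n * ω + σ (n * ω)) * β with hv
  have hcoeff : (m + σ m) * σ c = 0 := by
    refine eq_zero_of_mul_apply_add_sum_eq_zero (θ₀ := (1 : E ≃ₐ[F] E)) (θ := ![σ, τ, τ⁻¹])
      (b := ![(m + σ m) * σ a - (n + σ n), -v, -τ⁻¹ v])
      (by simp [Fin.forall_fin_succ, hσ1, hτ1]) fun y => ?_
    have hy := h y
    rw [bhTranspose, bhTranspose, hmω, ← hv] at hy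
    simp only [map_add, map_mul, hσ _, zero_mul, map_zero, add_zero] at hy
    simp only [Fin.sum_univ_three, Matrix.cons_val, AlgEquiv.one_apply]
    linear_combination hy
  simpa [hm] using hcoeff

end Trace

section RightNucleus

open Algebra (trace traceForm)

variable {F E : Type*} [Field F] [Field E] [Algebra F E] {σ τ : E ≃ₐ[F] E} {β ω : E}
  [FiniteDimensional F E] [Algebra.IsSeparable F E]

theorem eq_of_forall_trace_mul_eq {u v : E} (h : ∀ x, trace F E (x * u) = trace F E (x * v)) :
    u = v :=
  sub_eq_zero.mp <| (traceForm_nondegenerate F E).2 _ fun x => by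
    simp [Algebra.traceForm_apply, mul_sub, h]

theorem exists_trace_adjoint (μ : E →ₗ[F] E) :
    ∃ μ' : E → E, ∀ m u, trace F E (m * μ u) = trace F E (μ' m * u) :=
  have hnondeg := traceForm_nondegenerate F E
  ⟨(traceForm F E).leftAdjointOfNondegenerate hnondeg μ, fun m u =>
    ((traceForm F E).isAdjointPairLeftAdjointOfNondegenerate hnondeg μ m u).symm⟩

theorem linearMap_eq_of_forall_bhProduct_eq (hσ : Function.Involutive σ) (hω : σ ω ≠ ω)
    (hβ : β ≠ 0) (hττ : τ * τ ≠ 1) {μ ν : E →ₗ[F] E}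
    (h : ∀ x y, μ (bhProduct σ τ β ω x y) = ν (bhProduct σ τ β ω x y)) : μ = ν := by
  obtain ⟨μ', hμ'⟩ := exists_trace_adjoint μ
  obtain ⟨ν', hν'⟩ := exists_trace_adjoint ν
  have hadj (m : E) : μ' m = ν' m := by
    refine bhTranspose_injective hσ hω hβ hττ (funext fun y => ?_)
    refine eq_of_forall_trace_mul_eq (F := F) fun x => ?_
    rw [← trace_mul_bhProduct hσ, ← trace_mul_bhProduct hσ, ← hμ', ← hν', h]
  refine LinearMap.ext fun u => eq_of_forall_trace_mul_eq (F := F) fun m => ?_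
  rw [hμ', hν', hadj]

theorem exists_fixed_scalar_of_apply_bhProduct (hσ : Function.Involutive σ)
    (hστ : Function.Commute σ τ) (hω : σ ω ≠ ω) (hβ : β ≠ 0) (hτ1 : τ ≠ 1) (hστ1 : σ * τ ≠ 1)
    {μ : E →ₗ[F] E} {g : E → E}
    (h : ∀ x y, μ (bhProduct σ τ β ω x y) = bhProduct σ τ β ω x (g y)) :
    ∃ a, σ a = a ∧ τ a = a ∧ ∀ y, g y = a * y := by
  have hself (x y : E) : bhProduct σ τ β ω (g x) y = bhProduct σ τ β ω x (g y) := by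
    rw [bhProduct_comm, ← h, ← h, bhProduct_comm]
  obtain ⟨a, c, hg, hg', ha, -⟩ := exists_coeffs_of_bhProduct_eq hσ hστ hω hβ hτ1 hστ1 hself
  have hσ1 : σ ≠ 1 := DFunLike.ne_iff.mpr ⟨ω, hω⟩
  obtain ⟨m, hmω, hm⟩ := exists_mul_add_apply_eq_zero_and_add_apply_ne_zero hσ hω
  obtain ⟨μ', hμ'⟩ := exists_trace_adjoint μ
  have hadj (y : E) :
      bhTranspose σ τ β ω m (σ a * y + c * σ y) = bhTranspose σ τ β ω (μ' m) y :=
    eq_of_forall_trace_mul_eq fun x => by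
      rw [← hg', ← trace_mul_bhProduct hσ, ← trace_mul_bhProduct hσ, ← h, hμ']
  have hc : c = 0 := eq_zero_of_bhTranspose_mul_add_mul_apply_eq hσ hσ1 hτ1 hmω hm hadj
  have hσa : σ a = a := by simpa [hc] using (hg' 1).symm.trans (hg 1)
  exact ⟨a, hσa, by rwa [hστ, hσa] at ha, fun y => by simp [hg, hc]⟩

theorem mem_rightNucleus_bhProduct_iff (hσ : Function.Involutive σ)
    (hστ : Function.Commute σ τ) (hω : σ ω ≠ ω) (hβ : β ≠ 0) (hττ : τ * τ ≠ 1)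
    {μ : E →ₗ[F] E} :
    μ ∈ rightNucleus F (bhProduct σ τ β ω) ↔ ∃ a, σ a = a ∧ τ a = a ∧ ∀ x, μ x = a * x := by
  have hτ1 : τ ≠ 1 := ne_one_of_mul_self_ne_one hττ
  have hστ1 : σ * τ ≠ 1 := mul_ne_one_of_mul_self_ne_one (AlgEquiv.ext hσ) hττ
  constructor
  · intro h
    choose g hg using h
    obtain ⟨a, hσa, hτa, hga⟩ :=
      exists_fixed_scalar_of_apply_bhProduct hσ hστ hω hβ hτ1 hστ1 fun x y => hg y x
    have hμ : μ = LinearMap.mulLeft F a :=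
      linearMap_eq_of_forall_bhProduct_eq hσ hω hβ hττ fun x y => by
        rw [hg, hga, bhProduct_mul_right hσa hτa, LinearMap.mulLeft_apply]
    exact ⟨a, hσa, hτa, fun x => by rw [hμ, LinearMap.mulLeft_apply]⟩
  · rintro ⟨a, hσa, hτa, hμ⟩ y
    exact ⟨a * y, fun x => by rw [hμ, bhProduct_mul_right hσa hτa]⟩

end RightNucleus

section Cardinality

variable {F E : Type*} [CommSemiring F] [Field E] [Algebra F E]

theorem ncard_setOf_eq_mul (S : Set E) :
    {μ : E →ₗ[F] E | ∃ a, a ∈ S ∧ ∀ x, μ x = a * x}.ncard = S.ncard := by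
  have hinj : Function.Injective (LinearMap.mulLeft F : E → E →ₗ[F] E) := fun a b h => by
    simpa using LinearMap.congr_fun h 1
  rw [← Set.ncard_image_of_injective S hinj]
  congr 1
  ext μ
  simp [LinearMap.ext_iff, eq_comm]

theorem ncard_setOf_eq_mul_add_mul_apply {σ : E ≃ₐ[F] E} (hσ1 : σ ≠ 1) {ξ : E} (hξ0 : ξ ≠ 0)
    (S T : Set E) :
    {ψ : E →ₗ[F] E | ∃ a b, a ∈ S ∧ b ∈ T ∧ ∀ x, ψ x = a * x + b * ξ * σ x}.ncard =
      S.ncard * T.ncard := by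
  let f (ab : E × E) : E →ₗ[F] E :=
    LinearMap.mulLeft F ab.1 + LinearMap.mulLeft F (ab.2 * ξ) ∘ₗ σ.toLinearMap
  have hf (ab : E × E) (x : E) : f ab x = ab.1 * x + ab.2 * ξ * σ x := rfl
  have hinj : Function.Injective f := by
    rintro ⟨a, b⟩ ⟨a', b'⟩ h
    have hx (x : E) : a * x + b * ξ * σ x = a' * x + b' * ξ * σ x := LinearMap.congr_fun h x
    have hb : (b - b') * ξ = 0 := eq_zero_of_mul_apply_add_sum_eq_zero (θ₀ := σ)
      (θ := ![(1 : E ≃ₐ[F] E)]) (b := ![a - a']) (by simpa using hσ1.symm) fun x => by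
        simp only [Fin.sum_univ_one, Matrix.cons_val, AlgEquiv.one_apply]
        linear_combination hx x
    have hbb' : b = b' := sub_eq_zero.mp ((mul_eq_zero.mp hb).resolve_right hξ0)
    simpa [hbb'] using hx 1
  rw [← Set.ncard_prod, ← Set.ncard_image_of_injective _ hinj]
  congr 1
  ext ψ
  simp only [Set.mem_image, Set.mem_prod, Prod.exists, LinearMap.ext_iff, hf, Set.mem_ofPred_eq,
    eq_comm, and_assoc]

end Cardinality

section CyclicGroup

theorem pow_smul_eq_self_iff_of_coprime {M α : Type*} [Monoid M] [MulAction M α] {g : M} {k : ℕ}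
    (hk : k.Coprime (orderOf g)) {a : α} : g ^ k • a = a ↔ g • a = a := by
  refine ⟨fun h => ?_, fun h => (MulAction.stabilizerSubmonoid M a).pow_mem h k⟩
  obtain ⟨m, hm⟩ := exists_pow_eq_self_of_coprime hk
  rw [← hm]
  exact (MulAction.stabilizerSubmonoid M a).pow_mem h m

theorem exists_ne_zero_pow_apply_mul_apply_eq {F E : Type*} [CommSemiring F] [Field E]
    [Algebra F E] (φ : E ≃ₐ[F] E) {β : E} (hβ : β ≠ 0) (k : ℕ) :
    ∃ ξ ≠ 0, (φ ^ k) β * φ ξ = β * ξ := by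
  induction k with
  | zero => exact ⟨1, one_ne_zero, by simp⟩
  | succ k ih =>
    obtain ⟨ξ, hξ0, hξ⟩ := ih
    have hβk : (φ ^ k) β ≠ 0 := (map_ne_zero _).mpr hβ
    have hφβk : φ ((φ ^ k) β) ≠ 0 := (map_ne_zero φ).mpr hβk
    refine ⟨ξ / (φ ^ k) β, div_ne_zero hξ0 hβk, ?_⟩
    rw [pow_succ', AlgEquiv.mul_apply, map_div₀]
    field_simp
    linear_combination hξ

theorem ncard_fixed_pow_orderOf {F E : Type*} [Field F] [Field E] [Algebra F E] [Finite E]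
    (φ : E ≃ₐ[F] E) : {a | φ a = a}.ncard ^ orderOf φ = Nat.card E := by
  let K := IntermediateField.fixedField (Subgroup.zpowers φ)
  have hK : (K : Set E) = {a | φ a = a} := by
    ext a
    rw [SetLike.mem_coe, IntermediateField.mem_fixedField_iff]
    exact ⟨fun h => h φ (Subgroup.mem_zpowers φ), fun h f hf =>
      (Subgroup.zpowers_le (H := MulAction.stabilizer Gal(E/F) a)).mpr h hf⟩
  rw [← hK, ← Nat.card_coe_set_eq, ← Nat.card_zpowers,
    ← IntermediateField.finrank_fixedField_eq_card]
  exact (Module.natCard_eq_pow_finrank (K := K)).symm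

theorem coprime_add_two_mul {ℓ d : ℕ} (hcop : ℓ.Coprime d) (hodd : Odd (ℓ + d)) :
    (ℓ + d).Coprime (2 * ℓ) :=
  (Nat.coprime_two_right.mpr hodd).mul_right (by simpa using hcop.symm)

theorem pow_mul_pow_self_ne_one {G : Type*} [Monoid G] {g : G} {ℓ d : ℕ}
    (hg : orderOf g = 2 * ℓ) (hℓ : 1 < ℓ) (hcop : ℓ.Coprime d) : g ^ d * g ^ d ≠ 1 := by
  rw [← pow_add, ← two_mul]
  intro h
  have hdvd : ℓ ∣ d := Nat.dvd_of_mul_dvd_mul_left two_pos (hg ▸ orderOf_dvd_of_pow_eq_one h)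
  exact hℓ.ne' (hcop.eq_one_of_dvd hdvd)

theorem pow_commute_pow {F E : Type*} [CommSemiring F] [Semiring E] [Algebra F E]
    (φ : E ≃ₐ[F] E) (ℓ d : ℕ) : Function.Commute ⇑(φ ^ ℓ) ⇑(φ ^ d) :=
  fun x => DFunLike.congr_fun (Commute.pow_pow_self φ ℓ d).eq x

section CyclicProduct

variable {F E : Type*} [CommSemiring F] [Field E] [Algebra F E] {φ : E ≃ₐ[F] E}
  {ℓ d : ℕ} {β ω ξ : E}

theorem pow_involutive_of_orderOf_eq_two_mul (hφ : orderOf φ = 2 * ℓ) :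
    Function.Involutive ⇑(φ ^ ℓ) := fun x => by
  rw [← AlgEquiv.mul_apply, ← pow_add, ← two_mul, ← hφ, pow_orderOf_eq_one, AlgEquiv.one_apply]

theorem pow_mul_pow_apply_eq_self_iff (hφ : orderOf φ = 2 * ℓ) (hcop : ℓ.Coprime d)
    (hodd : Odd (ℓ + d)) {a : E} : (φ ^ ℓ) ((φ ^ d) a) = a ↔ φ a = a := by
  rw [← AlgEquiv.mul_apply, ← pow_add]
  exact pow_smul_eq_self_iff_of_coprime (a := a) (hφ ▸ coprime_add_two_mul hcop hodd)

theorem exists_ne_zero_pow_apply_mul_pow_add_apply_eq (hφ : orderOf φ = 2 * ℓ)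
    (hcop : ℓ.Coprime d) (hodd : Odd (ℓ + d)) (hβ : β ≠ 0) :
    ∃ ξ ≠ 0, (φ ^ ℓ) β * (φ ^ (ℓ + d)) ξ = β * ξ := by
  obtain ⟨m, hm⟩ := exists_pow_eq_self_of_coprime (x := φ) (hφ ▸ coprime_add_two_mul hcop hodd)
  obtain ⟨ξ, hξ0, hξ⟩ := exists_ne_zero_pow_apply_mul_apply_eq (φ ^ (ℓ + d)) hβ (m * ℓ)
  rw [pow_mul, hm] at hξ
  exact ⟨ξ, hξ0, hξ⟩

theorem middleNucleus_bhProduct_pow (hφ : orderOf φ = 2 * ℓ) (hℓ : 1 < ℓ) (hcop : ℓ.Coprime d)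
    (hodd : Odd (ℓ + d)) (hβ : β ≠ 0) (hω : (φ ^ ℓ) ω ≠ ω) (hξ0 : ξ ≠ 0)
    (hξ : (φ ^ ℓ) β * (φ ^ (ℓ + d)) ξ = β * ξ) :
    middleNucleus F (bhProduct (φ ^ ℓ) (φ ^ d) β ω) =
      {ψ | ∃ a b, φ a = a ∧ φ b = b ∧ ∀ x, ψ x = a * x + b * ξ * (φ ^ ℓ) x} := by
  have hfix {a : E} := pow_mul_pow_apply_eq_self_iff hφ hcop hodd (a := a)
  have hττ := pow_mul_pow_self_ne_one hφ hℓ hcop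
  have hσ := pow_involutive_of_orderOf_eq_two_mul hφ
  rw [pow_add, AlgEquiv.mul_apply] at hξ
  have hscale {b : E} :
      (φ ^ ℓ) β * (φ ^ ℓ) ((φ ^ d) (b * ξ)) = β * (b * ξ) ↔ φ b = b := by
    rw [← hfix, map_mul, map_mul, mul_left_comm, hξ, mul_left_comm β]
    exact mul_left_inj' (mul_ne_zero hβ hξ0)
  ext ψ
  rw [mem_middleNucleus_bhProduct_iff hσ (pow_commute_pow φ ℓ d) hω hβ
    (ne_one_of_mul_self_ne_one hττ) (mul_ne_one_of_mul_self_ne_one (AlgEquiv.ext hσ) hττ)]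
  constructor
  · rintro ⟨a, c, ha, hc, hψ⟩
    have hcξ : c / ξ * ξ = c := div_mul_cancel₀ c hξ0
    exact ⟨a, c / ξ, hfix.mp ha, hscale.mp (by rwa [hcξ]), by rwa [hcξ]⟩
  · rintro ⟨a, b, ha, hb, hψ⟩
    exact ⟨a, b * ξ, hfix.mpr ha, hscale.mpr hb, hψ⟩

theorem ncard_middleNucleus_bhProduct_pow (hφ : orderOf φ = 2 * ℓ) (hℓ : 1 < ℓ)
    (hcop : ℓ.Coprime d) (hodd : Odd (ℓ + d)) (hβ : β ≠ 0) (hω : (φ ^ ℓ) ω ≠ ω) :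
    (middleNucleus F (bhProduct (φ ^ ℓ) (φ ^ d) β ω)).ncard = {a | φ a = a}.ncard ^ 2 := by
  obtain ⟨ξ, hξ0, hξ⟩ := exists_ne_zero_pow_apply_mul_pow_add_apply_eq hφ hcop hodd hβ
  rw [middleNucleus_bhProduct_pow hφ hℓ hcop hodd hβ hω hξ0 hξ, sq]
  exact ncard_setOf_eq_mul_add_mul_apply (DFunLike.ne_iff.mpr ⟨ω, hω⟩) hξ0 _ _

end CyclicProduct

section CyclicSeparable

variable {F E : Type*} [Field F] [Field E] [Algebra F E] {φ : E ≃ₐ[F] E} {ℓ d : ℕ} {β ω : E}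
  [FiniteDimensional F E] [Algebra.IsSeparable F E]

theorem rightNucleus_bhProduct_pow (hφ : orderOf φ = 2 * ℓ) (hℓ : 1 < ℓ) (hcop : ℓ.Coprime d)
    (hodd : Odd (ℓ + d)) (hβ : β ≠ 0) (hω : (φ ^ ℓ) ω ≠ ω) :
    rightNucleus F (bhProduct (φ ^ ℓ) (φ ^ d) β ω) = {μ | ∃ a, φ a = a ∧ ∀ x, μ x = a * x} := by
  ext μ
  rw [mem_rightNucleus_bhProduct_iff (pow_involutive_of_orderOf_eq_two_mul hφ)
    (pow_commute_pow φ ℓ d) hω hβ (pow_mul_pow_self_ne_one hφ hℓ hcop)]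
  constructor
  · rintro ⟨a, hσa, hτa, hμ⟩
    exact ⟨a, (pow_mul_pow_apply_eq_self_iff hφ hcop hodd).mp (by rw [hτa, hσa]), hμ⟩
  · rintro ⟨a, ha, hμ⟩
    have hpow (k : ℕ) : (φ ^ k) a = a :=
      (MulAction.stabilizerSubmonoid Gal(E/F) a).pow_mem ha k
    exact ⟨a, hpow ℓ, hpow d, hμ⟩

theorem ncard_rightNucleus_bhProduct_pow (hφ : orderOf φ = 2 * ℓ) (hℓ : 1 < ℓ) (hcop : ℓ.Coprime d)
    (hodd : Odd (ℓ + d)) (hβ : β ≠ 0) (hω : (φ ^ ℓ) ω ≠ ω) :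
    (rightNucleus F (bhProduct (φ ^ ℓ) (φ ^ d) β ω)).ncard = {a | φ a = a}.ncard := by
  rw [rightNucleus_bhProduct_pow hφ hℓ hcop hodd hβ hω]
  exact ncard_setOf_eq_mul _

end CyclicSeparable

end CyclicGroup

theorem pow_sub_one_eq_zpow_one_sub_iff {G₀ : Type*} [CommGroupWithZero G₀] {β ξ : G₀}
    (hβ : β ≠ 0) (hξ : ξ ≠ 0) {m : ℕ} (hm : m ≠ 0) (n : ℕ) :
    ξ ^ (m - 1) = β ^ (1 - (n : ℤ)) ↔ β ^ n * ξ ^ m = β * ξ := by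
  rw [zpow_sub₀ hβ, zpow_one, zpow_natCast, eq_div_iff (pow_ne_zero n hβ),
    ← mul_left_inj' hξ, mul_right_comm, pow_sub_one_mul hm, mul_comm (ξ ^ m)]

section PowFrobenius

variable (p h : ℕ) [Fact p.Prime] (E : Type*) [Field E] [Finite E] [Algebra (ZMod p) E]

/-- The automorphism `x ↦ x ^ p ^ h` of a finite field of characteristic `p`. -/
noncomputable def powFrobenius : E ≃ₐ[ZMod p] E :=
  FiniteField.frobeniusAlgEquivOfAlgebraic (ZMod p) E ^ h

variable {E}

theorem powFrobenius_pow_apply (k : ℕ) (x : E) : (powFrobenius p h E ^ k) x = x ^ (p ^ h) ^ k := by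
  rw [powFrobenius, ← pow_mul, AlgEquiv.coe_pow,
    FiniteField.coe_frobeniusAlgEquivOfAlgebraic_iterate, ZMod.card, pow_mul]

theorem powFrobenius_apply (x : E) : powFrobenius p h E x = x ^ p ^ h := by
  simpa using powFrobenius_pow_apply p h 1 x

variable {p h}

theorem orderOf_powFrobenius (hh : h ≠ 0) {n : ℕ} (hn : Module.finrank (ZMod p) E = h * n) :
    orderOf (powFrobenius p h E) = n := by
  have hfrob : orderOf (FiniteField.frobeniusAlgEquivOfAlgebraic (ZMod p) E) = h * n := by
    rw [FiniteField.orderOf_frobeniusAlgEquivOfAlgebraic, hn]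
  rw [powFrobenius, orderOf_pow_of_dvd hh (hfrob ▸ dvd_mul_right h n), hfrob,
    Nat.mul_div_cancel_left n hh.bot_lt]

theorem ncard_powFrobenius_fixed (hh : h ≠ 0) {n : ℕ} (hn0 : n ≠ 0)
    (hn : Module.finrank (ZMod p) E = h * n) : {a | powFrobenius p h E a = a}.ncard = p ^ h := by
  have hcard := ncard_fixed_pow_orderOf (powFrobenius p h E)
  rw [orderOf_powFrobenius hh hn, Module.natCard_eq_pow_finrank (K := ZMod p), hn,
    Nat.card_zmod, pow_mul] at hcard
  exact Nat.pow_left_injective hn0 hcard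

theorem pow_sub_one_eq_zpow_iff_powFrobenius {β ξ : E} (hβ : β ≠ 0) (hξ : ξ ≠ 0) (m n : ℕ) :
    ξ ^ ((p ^ h) ^ m - 1) = β ^ (1 - ((p ^ h : ℕ) : ℤ) ^ n) ↔
      (powFrobenius p h E ^ n) β * (powFrobenius p h E ^ m) ξ = β * ξ := by
  have hq : 0 < p ^ h := pow_pos (Fact.out : p.Prime).pos h
  rw [powFrobenius_pow_apply, powFrobenius_pow_apply, ← Nat.cast_pow,
    pow_sub_one_eq_zpow_one_sub_iff hβ hξ (pow_pos hq m).ne']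

end PowFrobenius

theorem neg_ne_self_of_odd_char {R : Type*} [NonAssocRing R] [NoZeroDivisors R] {p : ℕ} [CharP R p]
    (hp : Odd p) {a : R} (ha : a ≠ 0) : -a ≠ a := by
  have : Nontrivial R := nontrivial_of_ne a 0 ha
  have hchar : ringChar R ≠ 2 := by
    rw [ringChar.eq R p]
    rintro rfl
    exact absurd hp (by decide)
  exact mt (Ring.eq_self_iff_eq_zero_of_char_ne_two hchar).mp ha

theorem bhMul_eq_bhProduct (p h ℓ d : ℕ) [Fact p.Prime] (β ω : GaloisField p (h * (2 * ℓ))) :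
    bhMul p h ℓ d (p ^ h) β ω =
      bhProduct (powFrobenius p h _ ^ ℓ) (powFrobenius p h _ ^ d) β ω := by
  ext x y
  simp only [bhMul, bhProduct, powFrobenius_pow_apply]

theorem statement15_general (p h ℓ d q : ℕ) [Fact p.Prime] (hh : 0 < h) (hq : q = p ^ h)
    (hℓ : 1 < ℓ) (hgcd : Nat.gcd ℓ d = 1) (hodd : Odd (ℓ + d))
    (β ω : GaloisField p (h * (2 * ℓ))) (hβ : β ≠ 0) (hω : ω ^ q ^ ℓ ≠ ω) :
    (∃ ξ : GaloisField p (h * (2 * ℓ)), ξ ≠ 0 ∧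
      ξ ^ (q ^ (ℓ + d) - 1) = β ^ ((1 : ℤ) - (q : ℤ) ^ ℓ)) ∧
    (∀ ξ : GaloisField p (h * (2 * ℓ)), ξ ≠ 0 →
      ξ ^ (q ^ (ℓ + d) - 1) = β ^ ((1 : ℤ) - (q : ℤ) ^ ℓ) →
      middleNucleus (ZMod p) (bhMul p h ℓ d q β ω) =
        {ψ | ∃ a b, a ^ q = a ∧ b ^ q = b ∧ ∀ x, ψ x = a * x + b * ξ * x ^ q ^ ℓ}) ∧
    Nat.card (middleNucleus (ZMod p) (bhMul p h ℓ d q β ω)) = q ^ 2 ∧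
    rightNucleus (ZMod p) (bhMul p h ℓ d q β ω) = {μ | ∃ a, a ^ q = a ∧ ∀ x, μ x = a * x} ∧
    Nat.card (rightNucleus (ZMod p) (bhMul p h ℓ d q β ω)) = q := by
  subst hq
  have hrank := GaloisField.finrank p (n := h * (2 * ℓ)) (by positivity)
  have hφ := orderOf_powFrobenius hh.ne' hrank
  have hfixed := ncard_powFrobenius_fixed hh.ne' (by positivity) hrank
  have hωφ : (powFrobenius p h _ ^ ℓ) ω ≠ ω := by rwa [powFrobenius_pow_apply]
  have hmiddle := ncard_middleNucleus_bhProduct_pow hφ hℓ hgcd hodd hβ hωφ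
  have hright := ncard_rightNucleus_bhProduct_pow hφ hℓ hgcd hodd hβ hωφ
  obtain ⟨ξ, hξ0, hξ⟩ := exists_ne_zero_pow_apply_mul_pow_add_apply_eq hφ hgcd hodd hβ
  rw [bhMul_eq_bhProduct, Nat.card_coe_set_eq, Nat.card_coe_set_eq]
  refine ⟨⟨ξ, hξ0, (pow_sub_one_eq_zpow_iff_powFrobenius hβ hξ0 _ _).mpr hξ⟩,
    fun ξ' hξ'0 hξ' => ?_, by rw [hmiddle, hfixed], ?_, by rw [hright, hfixed]⟩
  · simpa only [powFrobenius_pow_apply, powFrobenius_apply] using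
      middleNucleus_bhProduct_pow hφ hℓ hgcd hodd hβ hωφ hξ'0
        ((pow_sub_one_eq_zpow_iff_powFrobenius hβ hξ'0 _ _).mp hξ')
  · simpa only [powFrobenius_apply] using rightNucleus_bhProduct_pow hφ hℓ hgcd hodd hβ hωφ

theorem statement15 (p h ℓ d q : ℕ) [Fact p.Prime] (hp : Odd p) (hh : 0 < h)
    (hq : q = p ^ h) (hℓ : 1 < ℓ) (hd0 : 0 < d) (hd2 : d < 2 * ℓ)
    (hgcd : Nat.gcd ℓ d = 1) (hodd : Odd (ℓ + d))
    (β ω : GaloisField p (h * (2 * ℓ)))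
    (hβ : ¬ ∃ c : GaloisField p (h * (2 * ℓ)), c ^ 2 = β)
    (hω0 : ω ≠ 0) (hω : ω ^ q ^ ℓ = -ω) :
    -- (1) existence of ξ with ξ^{q^{ℓ+d}−1} = β^{1−q^ℓ} ...
    (∃ ξ : GaloisField p (h * (2 * ℓ)), ξ ≠ 0 ∧
      ξ ^ (q ^ (ℓ + d) - 1) = β ^ ((1 : ℤ) - (q : ℤ) ^ ℓ)) ∧
    -- ... and for any such ξ the middle-nucleus set is
    -- `{x ↦ a·x + b·ξ·x^{q^ℓ} : a, b ∈ F_q}`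
    (∀ ξ : GaloisField p (h * (2 * ℓ)), ξ ≠ 0 →
      ξ ^ (q ^ (ℓ + d) - 1) = β ^ ((1 : ℤ) - (q : ℤ) ^ ℓ) →
      {ψ : GaloisField p (h * (2 * ℓ)) →ₗ[ZMod p] GaloisField p (h * (2 * ℓ)) |
          ∀ y, ∃ z, ∀ x, bhMul p h ℓ d q β ω (ψ x) y = bhMul p h ℓ d q β ω x z} =
        {ψ : GaloisField p (h * (2 * ℓ)) →ₗ[ZMod p] GaloisField p (h * (2 * ℓ)) |
          ∃ a b : GaloisField p (h * (2 * ℓ)), a ^ q = a ∧ b ^ q = b ∧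
            ∀ x, ψ x = a * x + b * ξ * x ^ q ^ ℓ}) ∧
    -- hence the middle-nucleus set has exactly q² elements
    Nat.card {ψ : GaloisField p (h * (2 * ℓ)) →ₗ[ZMod p] GaloisField p (h * (2 * ℓ)) |
        ∀ y, ∃ z, ∀ x, bhMul p h ℓ d q β ω (ψ x) y = bhMul p h ℓ d q β ω x z} = q ^ 2 ∧
    -- (2) the right-nucleus set is `{x ↦ a·x : a ∈ F_q}` ...
    {μ : GaloisField p (h * (2 * ℓ)) →ₗ[ZMod p] GaloisField p (h * (2 * ℓ)) |
        ∀ y, ∃ z, ∀ x, μ (bhMul p h ℓ d q β ω x y) = bhMul p h ℓ d q β ω x z} =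
      {μ : GaloisField p (h * (2 * ℓ)) →ₗ[ZMod p] GaloisField p (h * (2 * ℓ)) |
        ∃ a : GaloisField p (h * (2 * ℓ)), a ^ q = a ∧ ∀ x, μ x = a * x} ∧
    -- ... hence has exactly q elements
    Nat.card {μ : GaloisField p (h * (2 * ℓ)) →ₗ[ZMod p] GaloisField p (h * (2 * ℓ)) |
        ∀ y, ∃ z, ∀ x, μ (bhMul p h ℓ d q β ω x y) = bhMul p h ℓ d q β ω x z} = q := by
  exact statement15_general p h ℓ d q hh hq hℓ hgcd hodd β ω (fun h0 => hβ ⟨0, by simp [h0]⟩)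
    (hω ▸ neg_ne_self_of_odd_char hp hω0)
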